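/- For all sufficiently large n and every S ⊆ 𝒫'_W with |S| < k, both |B_S| and |C_S| equal (1 ± α²)·n·∏_{p ∈ S} p^{−1}·∏_{p ∈ 𝒫'_W \ S} (1 − p^{−1}); that is, each lies between (1 − α²) and (1 + α²) times n·∏_{p ∈ S} p^{−1}·∏_{p ∈ 𝒫'_W \ S} (1 − p^{−1}). -/

import Mathlib

open Real Filter

/-- `W = W(n) = exp(2^{-10} (log n · log log n)^{1/2})`. -/
noncomputable def Wp (n : ℕ) : ℝ :=
  Real.exp ((2 : ℝ) ^ (-10 : ℤ) * Real.sqrt (Real.log n * Real.log (Real.log n)))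

/-- `k = k(n) = 2^{-5} (log n / log log n)^{1/2}`. -/
noncomputable def kp (n : ℕ) : ℝ :=
  (2 : ℝ) ^ (-5 : ℤ) * Real.sqrt (Real.log n / Real.log (Real.log n))

/-- `α = α(n) = exp(−k log k)`. -/
noncomputable def ap (n : ℕ) : ℝ := Real.exp (-(kp n * Real.log (kp n)))

/-- `𝒫_W`: the set of primes `p ≤ W(n)`. -/
noncomputable def primesLe (n : ℕ) : Set ℕ := {p : ℕ | p.Prime ∧ (p : ℝ) ≤ Wp n}

/-- `𝒫'_W = 𝒫_W \ {2}`: the odd primes `p ≤ W(n)`. -/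
noncomputable def primesLe' (n : ℕ) : Set ℕ := primesLe n \ {2}

/-- `[n]_o = {1, 3, …, 2n−1}`: the first `n` odd positive integers. -/
def oddSet (n : ℕ) : Set ℕ := {m : ℕ | Odd m ∧ m < 2 * n}

/-- `B_S`: the set of `m ∈ {1,…,n}` whose set of prime divisors in `𝒫'_W` is exactly `S`. -/
noncomputable def BSet (n : ℕ) (S : Set ℕ) : Set ℕ :=
  {m : ℕ | 1 ≤ m ∧ m ≤ n ∧ ∀ p ∈ primesLe' n, (p ∣ m ↔ p ∈ S)}

/-- `C_S`: the set of `m ∈ [n]_o` whose set of prime divisors in `𝒫'_W` is exactly `S`. -/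
noncomputable def CSet (n : ℕ) (S : Set ℕ) : Set ℕ :=
  {m : ℕ | m ∈ oddSet n ∧ ∀ p ∈ primesLe' n, (p ∣ m ↔ p ∈ S)}

/-!
Inclusion–exclusion over the primes of `𝒫'_W` has far too many terms, so it is truncated at depth
`r = ⌈2⁵ k⌉` (Brun's pure sieve): by Bonferroni's inequalities the truncation costs at most
`e_r(1/p)`, the `r`-th elementary symmetric polynomial of the reciprocals of the sieving primes,
relative to `n ∏_{p ∈ S} p⁻¹`.
Unique factorisation makes products of distinct primes distinct integers, so
`e₂(1/p) ≤ ∑_{m ≤ W²} 1/m`. Hence `σ = ∑ 1/p = O((log W)^{1/2})`, and Rankin's bound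
`e_r ≤ t^{-r} exp(t σ)` with `t = (log W)^{1/4}` gives `e_r ≤ W^{-63}`. The rounding errors add up
to at most `W^r`, a small power of `n`. Both are negligible since `α² ≥ W^{-32}`,
`∏_{p ∈ S} p⁻¹ ≥ W^{-k}` and `∏ (1 - 1/p) ≥ W^{-1}`.
-/

open Finset

/-! ### Elementary symmetric polynomials -/

section Esymm

section CommSemiring

variable {R : Type*} [CommSemiring R]

theorem esymm_zero_right (s : Multiset R) : s.esymm 0 = 1 := by
  simp [Multiset.esymm]

theorem esymm_zero_succ (j : ℕ) : (0 : Multiset R).esymm (j + 1) = 0 := by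
  simp [Multiset.esymm, Multiset.powersetCard_zero_right]

theorem esymm_cons_succ (a : R) (s : Multiset R) (j : ℕ) :
    (a ::ₘ s).esymm (j + 1) = s.esymm (j + 1) + a * s.esymm j := by
  simp [Multiset.esymm, Multiset.powersetCard_cons, Multiset.sum_map_mul_left]

theorem esymm_one_right (s : Multiset R) : s.esymm 1 = s.sum := by
  simp [Multiset.esymm, Multiset.powersetCard_one]

theorem sum_sq_eq_two_mul_esymm_add (s : Multiset R) :
    s.sum ^ 2 = 2 * s.esymm 2 + (s.map (· ^ 2)).sum := by
  induction s using Multiset.induction with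
  | empty => simp [esymm_zero_succ]
  | cons a s ih =>
    rw [Multiset.sum_cons, Multiset.map_cons, Multiset.sum_cons, esymm_cons_succ, esymm_one_right,
      add_sq, ih]
    ring

end CommSemiring

section Bonferroni

variable {R : Type*} [CommRing R]

theorem sum_neg_one_pow_mul_esymm_cons (a : R) (s : Multiset R) (r : ℕ) :
    ∑ j ∈ range (r + 1), (-1) ^ j * (a ::ₘ s).esymm j
      = ∑ j ∈ range (r + 1), (-1) ^ j * s.esymm j
        - a * ∑ j ∈ range r, (-1) ^ j * s.esymm j := by
  simp only [sum_range_succ' _ r, esymm_zero_right, esymm_cons_succ, mul_sum]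
  rw [add_sub_right_comm, ← sum_sub_distrib]
  congr 1
  exact sum_congr rfl fun j _ ↦ by ring

variable [LinearOrder R] [IsStrictOrderedRing R]

theorem prod_map_one_sub_mem_Icc {s : Multiset R} (hs : ∀ x ∈ s, x ∈ Set.Icc 0 1) :
    (s.map (1 - ·)).prod ∈ Set.Icc 0 1 :=
  Multiset.prod_induction (· ∈ Set.Icc 0 1) _
    (fun _ _ hx hy ↦ ⟨mul_nonneg hx.1 hy.1, mul_le_one₀ hx.2 hy.1 hy.2⟩) (by simp)
    (by simpa using fun x hx ↦ (hs x hx).symm)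

theorem abs_prod_one_sub_sub_sum_esymm_le {s : Multiset R} (hs : ∀ x ∈ s, x ∈ Set.Icc 0 1)
    (r : ℕ) :
    |(s.map (1 - ·)).prod - ∑ j ∈ range r, (-1) ^ j * s.esymm j| ≤ s.esymm r := by
  induction s using Multiset.induction generalizing r with
  | empty => cases r <;> simp [sum_range_succ', esymm_zero_right, esymm_zero_succ]
  | cons a s ih =>
    cases r with
    | zero =>
      have hprod := prod_map_one_sub_mem_Icc hs
      rw [range_zero, sum_empty, sub_zero, esymm_zero_right, abs_of_nonneg hprod.1]
      exact hprod.2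
    | succ r =>
      obtain ⟨⟨ha0, -⟩, hs⟩ := Multiset.forall_mem_cons.mp hs
      set P := (s.map (1 - ·)).prod
      set B : ℕ → R := fun r ↦ ∑ j ∈ range r, (-1) ^ j * s.esymm j
      calc |((a ::ₘ s).map (1 - ·)).prod
              - ∑ j ∈ range (r + 1), (-1) ^ j * (a ::ₘ s).esymm j|
          = |(P - B (r + 1)) - a * (P - B r)| := by
            rw [Multiset.map_cons, Multiset.prod_cons, sum_neg_one_pow_mul_esymm_cons]
            change |(1 - a) * P - (B (r + 1) - a * B r)| = _
            ring_nf
        _ ≤ |P - B (r + 1)| + |a * (P - B r)| := abs_sub _ _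
        _ = |P - B (r + 1)| + a * |P - B r| := by rw [abs_mul, abs_of_nonneg ha0]
        _ ≤ s.esymm (r + 1) + a * s.esymm r := by
            gcongr
            exacts [ih hs (r + 1), ih hs r]
        _ = (a ::ₘ s).esymm (r + 1) := (esymm_cons_succ a s r).symm

end Bonferroni

theorem esymm_mul_pow_le_exp {s : Multiset ℝ} (hs : ∀ x ∈ s, 0 ≤ x) {t : ℝ} (ht : 0 ≤ t)
    (r : ℕ) : s.esymm r * t ^ r ≤ exp (t * s.sum) := by
  induction s using Multiset.induction generalizing r with
  | empty => cases r <;> simp [esymm_zero_right, esymm_zero_succ]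
  | cons a s ih =>
    obtain ⟨ha, hs⟩ := Multiset.forall_mem_cons.mp hs
    cases r with
    | zero =>
      have hsum : 0 ≤ (a ::ₘ s).sum := Multiset.sum_nonneg (Multiset.forall_mem_cons.mpr ⟨ha, hs⟩)
      simpa [esymm_zero_right] using mul_nonneg ht hsum
    | succ r =>
      calc (a ::ₘ s).esymm (r + 1) * t ^ (r + 1)
          = s.esymm (r + 1) * t ^ (r + 1) + t * a * (s.esymm r * t ^ r) := by
            rw [esymm_cons_succ]
            ring
        _ ≤ exp (t * s.sum) + t * a * exp (t * s.sum) := by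
            gcongr
            exacts [ih hs (r + 1), ih hs r]
        _ = (t * a + 1) * exp (t * s.sum) := by ring
        _ ≤ exp (t * a) * exp (t * s.sum) := by
            gcongr
            exact add_one_le_exp _
        _ = exp (t * (a ::ₘ s).sum) := by rw [← exp_add, Multiset.sum_cons, mul_add]

end Esymm

/-! ### Brun's pure sieve -/

section Sieve

variable {α ι : Type*} (A : Finset α) (Q : Finset ι) (P : ι → α → Prop)
  [∀ i, DecidablePred (P i)]

/-- The `j`-th Bonferroni sum of the properties `P i`, `i ∈ Q`, on the finite set `A`: it counts the
pairs `(T, a)` where `T ⊆ Q` has `j` elements and `a ∈ A` has all the properties `P i`, `i ∈ T`.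
It is real valued so that it can be compared with the expected count directly. -/
def bonferroniSum (j : ℕ) : ℝ := ∑ T ∈ Q.powersetCard j, (#{a ∈ A | ∀ i ∈ T, P i a} : ℝ)

theorem sum_esymm_indicator_eq_bonferroniSum (j : ℕ) :
    ∑ a ∈ A, (Q.val.map fun i ↦ if P i a then (1 : ℝ) else 0).esymm j
      = bonferroniSum A Q P j := by
  simp only [esymm_map_val, bonferroniSum, card_filter, Nat.cast_sum]
  rw [sum_comm]
  refine sum_congr rfl fun T _ ↦ sum_congr rfl fun a _ ↦ ?_
  simp [prod_ite_zero]

theorem card_filter_forall_not_eq_sum_prod :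
    (#{a ∈ A | ∀ i ∈ Q, ¬ P i a} : ℝ)
      = ∑ a ∈ A, ((Q.val.map fun i ↦ if P i a then (1 : ℝ) else 0).map (1 - ·)).prod := by
  rw [card_filter, Nat.cast_sum]
  refine sum_congr rfl fun a _ ↦ ?_
  have hind : ∀ i, (1 : ℝ) - (if P i a then 1 else 0) = if ¬ P i a then 1 else 0 := fun i ↦ by
    split_ifs <;> simp_all
  simp only [Multiset.map_map, Function.comp_apply, hind, prod_map_val, prod_ite_zero,
    prod_const_one, Nat.cast_ite, Nat.cast_one, Nat.cast_zero]

theorem abs_card_filter_forall_not_sub_sum_bonferroniSum_le (r : ℕ) :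
    |(#{a ∈ A | ∀ i ∈ Q, ¬ P i a} : ℝ) - ∑ j ∈ range r, (-1) ^ j * bonferroniSum A Q P j|
      ≤ bonferroniSum A Q P r := by
  simp only [card_filter_forall_not_eq_sum_prod, ← sum_esymm_indicator_eq_bonferroniSum, mul_sum]
  rw [sum_comm, ← sum_sub_distrib]
  refine (abs_sum_le_sum_abs _ _).trans (sum_le_sum fun a _ ↦ ?_)
  refine abs_prod_one_sub_sub_sum_esymm_le (fun x hx ↦ ?_) r
  obtain ⟨i, -, rfl⟩ := Multiset.mem_map.mp hx
  split_ifs <;> simp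

variable {A Q P} {g : ι → ℝ} {X R : ℝ}

theorem abs_bonferroniSum_sub_mul_esymm_le
    (hA : ∀ T ⊆ Q, |(#{a ∈ A | ∀ i ∈ T, P i a} : ℝ) - X * ∏ i ∈ T, g i| ≤ R) (j : ℕ) :
    |bonferroniSum A Q P j - X * (Q.val.map g).esymm j| ≤ (#Q).choose j * R := by
  rw [bonferroniSum, esymm_map_val, mul_sum, ← sum_sub_distrib]
  calc _ ≤ ∑ T ∈ Q.powersetCard j, |(#{a ∈ A | ∀ i ∈ T, P i a} : ℝ) - X * ∏ i ∈ T, g i| :=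
        abs_sum_le_sum_abs _ _
    _ ≤ ∑ _T ∈ Q.powersetCard j, R :=
        sum_le_sum fun T hT ↦ hA T (mem_powersetCard.mp hT).1
    _ = (#Q).choose j * R := by simp

theorem abs_card_filter_forall_not_sub_le (hX : 0 ≤ X) (hg : ∀ i ∈ Q, g i ∈ Set.Icc 0 1)
    (hA : ∀ T ⊆ Q, |(#{a ∈ A | ∀ i ∈ T, P i a} : ℝ) - X * ∏ i ∈ T, g i| ≤ R) (r : ℕ) :
    |(#{a ∈ A | ∀ i ∈ Q, ¬ P i a} : ℝ) - X * ∏ i ∈ Q, (1 - g i)|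
      ≤ 2 * (X * (Q.val.map g).esymm r) + (∑ j ∈ range (r + 1), (#Q).choose j : ℕ) * R := by
  set N := bonferroniSum A Q P
  set e : ℕ → ℝ := (Q.val.map g).esymm
  have hcount := abs_le.mp (abs_card_filter_forall_not_sub_sum_bonferroniSum_le A Q P r)
  have hlast := abs_le.mp (abs_bonferroniSum_sub_mul_esymm_le hA r)
  have hsum : |∑ j ∈ range r, (-1) ^ j * N j - X * ∑ j ∈ range r, (-1) ^ j * e j|
      ≤ ∑ j ∈ range r, (#Q).choose j * R := by
    rw [mul_sum, ← sum_sub_distrib]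
    refine (abs_sum_le_sum_abs _ _).trans (sum_le_sum fun j _ ↦ ?_)
    rw [mul_left_comm, ← mul_sub, abs_mul, abs_neg_one_pow, one_mul]
    exact abs_bonferroniSum_sub_mul_esymm_le hA j
  have hprod : |X * ∏ i ∈ Q, (1 - g i) - X * ∑ j ∈ range r, (-1) ^ j * e j| ≤ X * e r := by
    rw [← mul_sub, abs_mul, abs_of_nonneg hX]
    have := abs_prod_one_sub_sub_sum_esymm_le (s := Q.val.map g) (by simpa using hg) r
    rw [Multiset.map_map] at this
    exact mul_le_mul_of_nonneg_left this hX
  rw [abs_le] at hsum hprod ⊢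
  rw [Nat.cast_sum, sum_mul, sum_range_succ]
  constructor <;> linarith

end Sieve

theorem sum_range_choose_le_succ_pow (q r : ℕ) :
    ∑ j ∈ range (r + 1), q.choose j ≤ (q + 1) ^ r := by
  rw [add_pow]
  refine sum_le_sum fun j hj ↦ ?_
  calc q.choose j ≤ q ^ j := Nat.choose_le_pow q j
    _ ≤ q ^ j * 1 ^ (r - j) * r.choose j := by
      rw [one_pow, mul_one]
      exact Nat.le_mul_of_pos_right _ (Nat.choose_pos (mem_range_succ_iff.mp hj))

/-! ### Reciprocals of primes -/

section Primes

variable {Q : Finset ℕ}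

theorem injOn_prod_of_forall_prime :
    Set.InjOn (fun T : Finset ℕ ↦ ∏ p ∈ T, p) {T | ∀ p ∈ T, p.Prime} :=
  Set.LeftInvOn.injOn (f₁' := Nat.primeFactors) fun _ hT ↦ Nat.primeFactors_prod hT

theorem esymm_inv_primes_le_one_add_log {N : ℕ} (hQ : ∀ p ∈ Q, p.Prime) (hQN : ∀ p ∈ Q, p ≤ N)
    (j : ℕ) : (Q.val.map fun p : ℕ ↦ (p : ℝ)⁻¹).esymm j ≤ 1 + j * log N := by
  have hprime : ∀ T ∈ Q.powersetCard j, ∀ p ∈ T, p.Prime := fun T hT p hp ↦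
    hQ p ((mem_powersetCard.mp hT).1 hp)
  have hsub : (Q.powersetCard j).image (fun T ↦ ∏ p ∈ T, p) ⊆ Icc 1 (N ^ j) := by
    refine image_subset_iff.mpr fun T hT ↦ mem_Icc.mpr ⟨?_, ?_⟩
    · exact prod_pos fun p hp ↦ (hprime T hT p hp).pos
    · obtain ⟨hTQ, rfl⟩ := mem_powersetCard.mp hT
      exact prod_le_pow_card _ _ _ fun p hp ↦ hQN p (hTQ hp)
  calc (Q.val.map fun p : ℕ ↦ (p : ℝ)⁻¹).esymm j
      = ∑ T ∈ Q.powersetCard j, ((∏ p ∈ T, p : ℕ) : ℝ)⁻¹ := by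
        simp only [esymm_map_val, Nat.cast_prod, prod_inv_distrib]
    _ = ∑ m ∈ (Q.powersetCard j).image (fun T ↦ ∏ p ∈ T, p), (m : ℝ)⁻¹ :=
        (sum_image (f := fun m : ℕ ↦ (m : ℝ)⁻¹)
          (injOn_prod_of_forall_prime.mono fun T hT ↦ hprime T hT)).symm
    _ ≤ ∑ m ∈ Icc 1 (N ^ j), (m : ℝ)⁻¹ :=
        sum_le_sum_of_subset_of_nonneg hsub fun m _ _ ↦ by positivity
    _ = (harmonic (N ^ j) : ℝ) := by simp [harmonic_eq_sum_Icc]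
    _ ≤ 1 + log ((N ^ j : ℕ) : ℝ) := harmonic_le_one_add_log _
    _ = 1 + j * log N := by rw [Nat.cast_pow, log_pow]

theorem sum_inv_primes_sq_le {N : ℕ} (hQ : ∀ p ∈ Q, p.Prime) (hQN : ∀ p ∈ Q, p ≤ N) :
    (∑ p ∈ Q, (p : ℝ)⁻¹) ^ 2 ≤ 5 + 8 * log N := by
  have hsq : (∑ p ∈ Q, (p : ℝ)⁻¹) ^ 2
      = 2 * (Q.val.map fun p : ℕ ↦ (p : ℝ)⁻¹).esymm 2 + ∑ p ∈ Q, ((p : ℝ)⁻¹) ^ 2 := by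
    simpa [Multiset.map_map] using
      sum_sq_eq_two_mul_esymm_add (Q.val.map fun p : ℕ ↦ (p : ℝ)⁻¹)
  have hesymm := esymm_inv_primes_le_one_add_log hQ hQN 2
  have hdiag : ∑ p ∈ Q, ((p : ℝ)⁻¹) ^ 2 ≤ ∑ p ∈ Q, (p : ℝ)⁻¹ :=
    sum_le_sum fun p _ ↦ pow_le_of_le_one (by positivity) (Nat.cast_inv_le_one p) two_ne_zero
  push_cast at hesymm
  linarith [sq_nonneg (∑ p ∈ Q, (p : ℝ)⁻¹ - 1)]

variable {W : ℝ}

theorem sum_inv_primes_le_three_mul_sqrt_log (hQ : ∀ p ∈ Q, p.Prime) (hQW : ∀ p ∈ Q, (p : ℝ) ≤ W)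
    (hW : exp 5 ≤ W) : ∑ p ∈ Q, (p : ℝ)⁻¹ ≤ 3 * √(log W) := by
  have hW0 : 0 < W := (exp_pos 5).trans_le hW
  have hlog : 5 ≤ log W := (le_log_iff_exp_le hW0).mpr hW
  have hfloor : log ⌊W⌋₊ ≤ log W := by
    have hW1 : 1 ≤ W := (one_le_exp (by norm_num)).trans hW
    exact log_le_log (Nat.cast_pos.mpr (Nat.floor_pos.mpr hW1)) (Nat.floor_le hW0.le)
  have hsq := sum_inv_primes_sq_le hQ fun p hp ↦ Nat.le_floor (hQW p hp)
  refine le_of_sq_le_sq ?_ (by positivity)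
  rw [mul_pow, sq_sqrt (by linarith)]
  linarith

/-- Rankin's bound at `t = (log W) ^ (1 / 4)`. -/
theorem esymm_inv_primes_le_exp (hQ : ∀ p ∈ Q, p.Prime) (hQW : ∀ p ∈ Q, (p : ℝ) ≤ W)
    (hW : exp 81 ≤ W) (r : ℕ) :
    (Q.val.map fun p : ℕ ↦ (p : ℝ)⁻¹).esymm r ≤ exp (log W - r * (log (log W) / 4)) := by
  have hlog : 81 ≤ log W := (le_log_iff_exp_le ((exp_pos 81).trans_le hW)).mpr hW
  set t := exp (log (log W) / 4)
  have ht0 : 0 < t := exp_pos _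
  have ht4 : t ^ 4 = log W := by
    rw [← exp_nat_mul, Nat.cast_ofNat, mul_div_cancel₀ _ (by norm_num), exp_log (by linarith)]
  have ht3 : 3 ≤ t := le_of_pow_le_pow_left₀ four_ne_zero ht0.le (by rw [ht4]; linarith)
  have hsum : ∑ p ∈ Q, (p : ℝ)⁻¹ ≤ 3 * t ^ 2 := by
    have h := sum_inv_primes_le_three_mul_sqrt_log hQ hQW ((exp_le_exp.mpr (by norm_num)).trans hW)
    rwa [← ht4, show t ^ 4 = (t ^ 2) ^ 2 by ring, sqrt_sq (by positivity)] at h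
  have htsum : t * ∑ p ∈ Q, (p : ℝ)⁻¹ ≤ log W :=
    calc t * ∑ p ∈ Q, (p : ℝ)⁻¹ ≤ t * (3 * t ^ 2) := by gcongr
      _ = 3 * t ^ 3 := by ring
      _ ≤ t * t ^ 3 := by gcongr
      _ = log W := by rw [← ht4]; ring
  rw [exp_sub, exp_nat_mul, le_div_iff₀ (by positivity)]
  refine (esymm_mul_pow_le_exp ?_ ht0.le r).trans (exp_le_exp.mpr htsum)
  simp

theorem exp_neg_two_mul_le_one_sub {x : ℝ} (h0 : 0 ≤ x) (h1 : x ≤ 1 / 2) :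
    exp (-(2 * x)) ≤ 1 - x := by
  rw [exp_neg, inv_le_comm₀ (exp_pos _) (by linarith)]
  refine le_trans ?_ (add_one_le_exp _)
  rw [inv_le_iff_one_le_mul₀ (by linarith)]
  nlinarith

theorem inv_le_prod_one_sub_inv_primes (hQ : ∀ p ∈ Q, p.Prime) (hQW : ∀ p ∈ Q, (p : ℝ) ≤ W)
    (hW : exp 36 ≤ W) : W⁻¹ ≤ ∏ p ∈ Q, (1 - (p : ℝ)⁻¹) := by
  have hW0 : 0 < W := (exp_pos 36).trans_le hW
  have hlog : 36 ≤ log W := (le_log_iff_exp_le hW0).mpr hW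
  have hsqrt : 6 ≤ √(log W) := le_sqrt_of_sq_le (by linarith)
  have hsum : 2 * ∑ p ∈ Q, (p : ℝ)⁻¹ ≤ log W :=
    calc 2 * ∑ p ∈ Q, (p : ℝ)⁻¹ ≤ 6 * √(log W) := by
          linarith [sum_inv_primes_le_three_mul_sqrt_log hQ hQW
            ((exp_le_exp.mpr (by norm_num)).trans hW)]
      _ ≤ √(log W) * √(log W) := by gcongr
      _ = log W := mul_self_sqrt (by linarith)
  calc W⁻¹ = exp (-log W) := by rw [exp_neg, exp_log hW0]
    _ ≤ exp (∑ p ∈ Q, -(2 * (p : ℝ)⁻¹)) := by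
        rw [sum_neg_distrib, ← mul_sum]
        exact exp_le_exp.mpr (neg_le_neg hsum)
    _ = ∏ p ∈ Q, exp (-(2 * (p : ℝ)⁻¹)) := exp_sum _ _
    _ ≤ ∏ p ∈ Q, (1 - (p : ℝ)⁻¹) := by
        refine prod_le_prod (fun _ _ ↦ (exp_pos _).le) fun p hp ↦ ?_
        refine exp_neg_two_mul_le_one_sub (by positivity) ?_
        rw [one_div]
        exact inv_anti₀ two_pos (Nat.ofNat_le_cast.mpr (hQ p hp).two_le)

theorem card_primes_add_one_le (hQ : ∀ p ∈ Q, p.Prime) (hQW : ∀ p ∈ Q, (p : ℝ) ≤ W)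
    (hW : 1 ≤ W) : (#Q + 1 : ℝ) ≤ W := by
  have hsub : Q ⊆ Icc 2 ⌊W⌋₊ := fun p hp ↦
    mem_Icc.mpr ⟨(hQ p hp).two_le, Nat.le_floor (hQW p hp)⟩
  have hcard : #Q + 1 ≤ ⌊W⌋₊ := by
    have h := card_le_card hsub
    have hfloor := Nat.floor_pos.mpr hW
    rw [Nat.card_Icc] at h
    omega
  exact (mod_cast hcard : (#Q + 1 : ℝ) ≤ ⌊W⌋₊).trans (Nat.floor_le (by linarith))

theorem inv_pow_card_le_prod_inv_primes (hQ : ∀ p ∈ Q, p.Prime) (hQW : ∀ p ∈ Q, (p : ℝ) ≤ W) :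
    (W ^ #Q)⁻¹ ≤ ∏ p ∈ Q, (p : ℝ)⁻¹ := by
  rw [prod_inv_distrib, ← prod_const]
  exact inv_anti₀ (prod_pos fun p hp ↦ Nat.cast_pos.mpr (hQ p hp).pos)
    (prod_le_prod (fun _ _ ↦ Nat.cast_nonneg _) hQW)

theorem forall_mem_dvd_iff_prod_dvd_of_primes (hQ : ∀ p ∈ Q, p.Prime) {m : ℕ} :
    (∀ p ∈ Q, p ∣ m) ↔ ∏ p ∈ Q, p ∣ m :=
  ⟨fun h ↦ prod_primes_dvd m (fun p hp ↦ (hQ p hp).prime) h,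
    fun h _ hp ↦ (dvd_prod_of_mem _ hp).trans h⟩

end Primes

/-! ### Equidistribution modulo odd numbers -/

section OddEquidistributed

/-- `A` contains the expected number `X / e` of multiples of every odd `e`, up to an error of at
most `1`. This is the only property that the sieve needs of `{1, …, n}` and `{1, 3, …, 2n - 1}`,
both with `X = n`. -/
def OddEquidistributed (A : Finset ℕ) (X : ℝ) : Prop :=
  ∀ e : ℕ, Odd e → |(#{m ∈ A | e ∣ m} : ℝ) - X / e| ≤ 1

theorem natCast_div_mem_Ioc (n e : ℕ) :
    ((n / e : ℕ) : ℝ) ∈ Set.Ioc ((n : ℝ) / e - 1) (n / e) := by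
  rw [← Nat.floor_div_eq_div (K := ℝ)]
  exact ⟨Nat.sub_one_lt_floor _, Nat.floor_le (by positivity)⟩

theorem oddEquidistributed_Icc (n : ℕ) : OddEquidistributed (Icc 1 n) n := fun e _ ↦ by
  have hcard : #{m ∈ Icc 1 n | e ∣ m} = n / e := Nat.Ioc_filter_dvd_card_eq_div n e
  have h := natCast_div_mem_Ioc n e
  rw [hcard, abs_le]
  constructor <;> linarith [h.1, h.2]

theorem filter_odd_dvd_eq_sdiff {e : ℕ} (he : Odd e) (n : ℕ) :
    ({m ∈ range (2 * n) | Odd m ∧ e ∣ m} : Finset ℕ)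
      = ({m ∈ Ioc 0 (2 * n) | e ∣ m} : Finset ℕ) \ {m ∈ Ioc 0 (2 * n) | 2 * e ∣ m} := by
  ext m
  have hdvd : 2 * e ∣ m ↔ 2 ∣ m ∧ e ∣ m :=
    ⟨fun h ↦ ⟨dvd_of_mul_right_dvd h, dvd_of_mul_left_dvd h⟩,
      fun h ↦ (Nat.coprime_two_left.mpr he).mul_dvd_of_dvd_of_dvd h.1 h.2⟩
  simp only [mem_filter, Finset.mem_sdiff, mem_range, mem_Ioc, hdvd, Nat.odd_iff]
  grind

theorem card_filter_odd_dvd {e : ℕ} (he : Odd e) (n : ℕ) :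
    (#{m ∈ range (2 * n) | Odd m ∧ e ∣ m} : ℝ) = (2 * n / e : ℕ) - (n / e : ℕ) := by
  rw [filter_odd_dvd_eq_sdiff he, cast_card_sdiff, Nat.Ioc_filter_dvd_card_eq_div,
    Nat.Ioc_filter_dvd_card_eq_div, Nat.mul_div_mul_left _ _ two_pos]
  exact monotone_filter_right _ fun m _ ↦ dvd_of_mul_left_dvd

theorem oddEquidistributed_filter_odd (n : ℕ) :
    OddEquidistributed {m ∈ range (2 * n) | Odd m} n := fun e he ↦ by
  have h2n := natCast_div_mem_Ioc (2 * n) e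
  have hn := natCast_div_mem_Ioc n e
  rw [Nat.cast_mul, Nat.cast_ofNat, mul_div_assoc] at h2n
  rw [filter_filter, card_filter_odd_dvd he, abs_le]
  constructor <;> linarith [h2n.1, h2n.2, hn.1, hn.2]

variable {A S Q : Finset ℕ} {X : ℝ}

theorem OddEquidistributed.abs_card_filter_dvd_sub_le (hA : OddEquidistributed A X)
    (hS : ∀ p ∈ S, p.Prime ∧ p ≠ 2) :
    |(#{m ∈ A | ∀ p ∈ S, p ∣ m} : ℝ) - X * ∏ p ∈ S, (p : ℝ)⁻¹| ≤ 1 := by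
  have hodd : Odd (∏ p ∈ S, p) :=
    prod_induction _ Odd (fun _ _ ↦ Odd.mul) odd_one fun p hp ↦
      (hS p hp).1.odd_of_ne_two (hS p hp).2
  simp only [forall_mem_dvd_iff_prod_dvd_of_primes fun p hp ↦ (hS p hp).1]
  rw [prod_inv_distrib, ← Nat.cast_prod, ← div_eq_mul_inv]
  exact hA _ hodd

theorem OddEquidistributed.abs_card_sifted_sub_le (hA : OddEquidistributed A X) (hX : 0 ≤ X)
    (hS : ∀ p ∈ S, p.Prime ∧ p ≠ 2) (hQ : ∀ p ∈ Q, p.Prime ∧ p ≠ 2) (hSQ : Disjoint S Q) (r : ℕ) :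
    |(#{m ∈ A | (∀ p ∈ S, p ∣ m) ∧ ∀ p ∈ Q, ¬ p ∣ m} : ℝ)
        - X * (∏ p ∈ S, (p : ℝ)⁻¹) * ∏ p ∈ Q, (1 - (p : ℝ)⁻¹)|
      ≤ 2 * (X * (∏ p ∈ S, (p : ℝ)⁻¹) * (Q.val.map fun p : ℕ ↦ (p : ℝ)⁻¹).esymm r)
        + (#Q + 1) ^ r := by
  have hdvd : ∀ T ⊆ Q, |(#{m ∈ {m ∈ A | ∀ p ∈ S, p ∣ m} | ∀ p ∈ T, p ∣ m} : ℝ)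
      - X * (∏ p ∈ S, (p : ℝ)⁻¹) * ∏ p ∈ T, (p : ℝ)⁻¹| ≤ 1 := fun T hT ↦ by
    have h := hA.abs_card_filter_dvd_sub_le (S := S ∪ T) fun p hp ↦
      (mem_union.mp hp).elim (hS p) fun hpT ↦ hQ p (hT hpT)
    rw [prod_union (hSQ.mono_right hT), ← mul_assoc] at h
    simpa only [filter_filter, forall_mem_union] using h
  have hsieve := abs_card_filter_forall_not_sub_le (P := fun p m ↦ p ∣ m)
    (mul_nonneg hX (prod_nonneg fun p _ ↦ inv_nonneg.mpr p.cast_nonneg))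
    (fun p _ ↦ ⟨inv_nonneg.mpr p.cast_nonneg, p.cast_inv_le_one⟩) hdvd r
  rw [filter_filter, mul_one] at hsieve
  refine hsieve.trans (add_le_add_right ?_ _)
  exact_mod_cast sum_range_choose_le_succ_pow #Q r

end OddEquidistributed

/-! ### The parameters -/

section Parameters

variable {n : ℕ}

theorem log_Wp (n : ℕ) : log (Wp n) = 2 ^ (-10 : ℤ) * √(log n * log (log n)) := log_exp _

theorem Wp_pos (n : ℕ) : 0 < Wp n := exp_pos _

theorem inv_Wp_pow (n m : ℕ) : (Wp n ^ m)⁻¹ = exp (-(m * log (Wp n))) := by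
  rw [exp_neg, exp_nat_mul, exp_log (Wp_pos n)]

theorem kp_nonneg (n : ℕ) : 0 ≤ kp n := by
  unfold kp
  positivity

theorem log_natCast_pos_of_log_log_pos (h : 0 < log (log n)) : 0 < log n :=
  (log_natCast_nonneg n).lt_of_ne fun h0 ↦ by simp [← h0] at h

theorem kp_mul_log_Wp (h : 0 < log (log n)) : kp n * log (Wp n) = log n / 2 ^ 15 := by
  have hlog : 0 < log n := log_natCast_pos_of_log_log_pos h
  calc kp n * log (Wp n)
      = 2 ^ (-5 : ℤ) * 2 ^ (-10 : ℤ) * √(log n / log (log n) * (log n * log (log n))) := by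
        rw [log_Wp, kp, mul_mul_mul_comm, ← sqrt_mul (by positivity)]
    _ = 2 ^ (-5 : ℤ) * 2 ^ (-10 : ℤ) * √(log n ^ 2) := by
        congr 2
        field_simp
    _ = log n / 2 ^ 15 := by
        rw [sqrt_sq hlog.le]
        ring

theorem kp_mul_log_log (h : 0 < log (log n)) : kp n * log (log n) = 2 ^ 5 * log (Wp n) := by
  have hsqrt : √(log n / log (log n)) * log (log n) = √(log n * log (log n)) := by
    nth_rw 2 [← sqrt_sq h.le]
    rw [← sqrt_mul' _ (sq_nonneg _)]
    congr 1
    field_simp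
  rw [log_Wp, kp, mul_assoc, hsqrt]
  ring

theorem kp_mul_log_kp_le (h : 1 ≤ log (log n)) : kp n * log (kp n) ≤ 2 ^ 4 * log (Wp n) := by
  have hlog : 0 < log n := log_natCast_pos_of_log_log_pos (by linarith)
  have hk0 : 0 < kp n := by
    unfold kp
    positivity
  have hk : kp n ≤ √(log n) :=
    calc kp n ≤ √(log n / log (log n)) :=
          mul_le_of_le_one_left (sqrt_nonneg _) (by norm_num)
      _ ≤ √(log n) := sqrt_le_sqrt (div_le_self hlog.le h)
  calc kp n * log (kp n) ≤ kp n * log √(log n) := by gcongr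
    _ = kp n * log (log n) / 2 := by rw [log_sqrt hlog.le, mul_div_assoc]
    _ = 2 ^ 4 * log (Wp n) := by
        rw [kp_mul_log_log (by linarith)]
        ring

theorem inv_Wp_pow_le_ap_sq (h : 1 ≤ log (log n)) : (Wp n ^ 32)⁻¹ ≤ ap n ^ 2 := by
  rw [inv_Wp_pow, ap, ← exp_nat_mul, exp_le_exp]
  push_cast
  linarith [kp_mul_log_kp_le h]

theorem log_Wp_le (h : 0 < log (log n)) : log (Wp n) ≤ log n / 2 ^ 10 := by
  have hlog : 0 < log n := log_natCast_pos_of_log_log_pos h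
  calc log (Wp n) = 2 ^ (-10 : ℤ) * √(log n * log (log n)) := log_Wp n
    _ ≤ 2 ^ (-10 : ℤ) * √(log n * log n) := by
        have hloglog : log (log n) ≤ log n := log_le_self hlog.le
        gcongr 2 ^ (-10 : ℤ) * √(log n * ?_)
    _ = log n / 2 ^ 10 := by
        rw [sqrt_mul_self hlog.le]
        ring

theorem Wp_pow_le_natCast (h : 0 < log (log n)) {m : ℕ} (hm : m ≤ 2 ^ 14 * kp n + 2 ^ 9) :
    Wp n ^ m ≤ n := by
  have hlog : 0 < log n := log_natCast_pos_of_log_log_pos h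
  have hn : (0 : ℝ) < n := Nat.cast_pos.mpr (Nat.pos_of_ne_zero fun h0 ↦ by simp [h0] at hlog)
  have hW : 0 ≤ log (Wp n) := by
    rw [log_Wp]
    positivity
  rw [← log_le_log_iff (pow_pos (Wp_pos n) m) hn, log_pow]
  calc m * log (Wp n) ≤ (2 ^ 14 * kp n + 2 ^ 9) * log (Wp n) := by gcongr
    _ = 2 ^ 14 * (kp n * log (Wp n)) + 2 ^ 9 * log (Wp n) := by ring
    _ ≤ 2 ^ 14 * (log n / 2 ^ 15) + 2 ^ 9 * (log n / 2 ^ 10) := by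
        rw [kp_mul_log_Wp h]
        gcongr
        exact log_Wp_le h
    _ = log n := by ring

/-- The depth `⌈2⁵ k⌉ = ⌈(log n / log log n)^{1/2}⌉` at which inclusion–exclusion is truncated: deep
enough for `W ^ brunDepth n` to be a small power of `n`. -/
noncomputable def brunDepth (n : ℕ) : ℕ := ⌈2 ^ 5 * kp n⌉₊

section LargeN

variable (hn : 40 ≤ log (log n))
include hn

theorem log_log_div_four_le_log_log_Wp : log (log n) / 4 ≤ log (log (Wp n)) := by
  have hlog : 0 < log n := log_natCast_pos_of_log_log_pos (by linarith)
  calc log (log n) / 4 ≤ -10 * log 2 + log (log n) / 2 := by linarith [log_two_lt_d9]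
    _ = log (2 ^ (-10 : ℤ) * √(log n)) := by
        rw [log_mul (by positivity) (by positivity), log_zpow, log_sqrt hlog.le]
        push_cast
        ring
    _ ≤ log (log (Wp n)) := by
        rw [log_Wp]
        gcongr
        exact le_mul_of_one_le_right hlog.le (by linarith)

theorem exp_le_Wp : exp 81 ≤ Wp n := by
  have hlog : 0 < log n := log_natCast_pos_of_log_log_pos (by linarith)
  have hW : 0 < log (Wp n) := by
    rw [log_Wp]
    have : 0 < log (log n) := by linarith
    positivity
  rw [← le_log_iff_exp_le (Wp_pos n)]
  calc (81 : ℝ) ≤ 2 ^ 10 := by norm_num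
    _ ≤ exp 1 ^ 10 := by
        gcongr
        linarith [add_one_le_exp (1 : ℝ)]
    _ = exp 10 := by rw [← exp_nat_mul]; norm_num
    _ ≤ exp (log (log (Wp n))) := by
        gcongr
        linarith [log_log_div_four_le_log_log_Wp hn]
    _ = log (Wp n) := exp_log hW

variable {Q S : Finset ℕ}

theorem esymm_brunDepth_le (hQ : (Q : Set ℕ) ⊆ primesLe' n) :
    (Q.val.map fun p : ℕ ↦ (p : ℝ)⁻¹).esymm (brunDepth n) ≤ (Wp n ^ 63)⁻¹ := by
  have hdepth : 2 ^ 6 * log (Wp n) ≤ brunDepth n * (log (log (Wp n)) / 4) :=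
    calc 2 ^ 6 * log (Wp n) = 2 ^ 5 * kp n * (log (log n) / 4 / 4) := by
          linarith [kp_mul_log_log (n := n) (by linarith)]
      _ ≤ brunDepth n * (log (log (Wp n)) / 4) := by
          gcongr
          exacts [Nat.le_ceil _, log_log_div_four_le_log_log_Wp hn]
  refine (esymm_inv_primes_le_exp (fun p hp ↦ (hQ hp).1.1) (fun p hp ↦ (hQ hp).1.2)
    (exp_le_Wp hn) _).trans ?_
  rw [inv_Wp_pow, exp_le_exp]
  push_cast
  linarith

theorem card_add_one_pow_brunDepth_le (hQ : (Q : Set ℕ) ⊆ primesLe' n)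
    (hS : (S : Set ℕ) ⊆ primesLe' n) (hcard : #S ≤ kp n) :
    (#Q + 1 : ℝ) ^ brunDepth n ≤ (Wp n ^ 34)⁻¹ * (n * ∏ p ∈ S, (p : ℝ)⁻¹) := by
  have hW := Wp_pos n
  have hW1 : 1 ≤ Wp n := (one_le_exp (by norm_num)).trans (exp_le_Wp hn)
  have hexponent : ((34 + #S + brunDepth n : ℕ) : ℝ) ≤ 2 ^ 14 * kp n + 2 ^ 9 := by
    have hceil : (brunDepth n : ℝ) < 2 ^ 5 * kp n + 1 :=
      Nat.ceil_lt_add_one (mul_nonneg (by norm_num) (kp_nonneg n))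
    push_cast
    linarith [kp_nonneg n]
  calc (#Q + 1 : ℝ) ^ brunDepth n ≤ Wp n ^ brunDepth n := by
        gcongr
        exact card_primes_add_one_le (fun p hp ↦ (hQ hp).1.1) (fun p hp ↦ (hQ hp).1.2) hW1
    _ = (Wp n ^ 34)⁻¹ * (Wp n ^ (34 + #S + brunDepth n) * (Wp n ^ #S)⁻¹) := by
        rw [pow_add, pow_add]
        field_simp
    _ ≤ (Wp n ^ 34)⁻¹ * (n * ∏ p ∈ S, (p : ℝ)⁻¹) := by
        gcongr
        · exact Wp_pow_le_natCast (by linarith) hexponent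
        · exact inv_pow_card_le_prod_inv_primes (fun p hp ↦ (hS hp).1.1) fun p hp ↦ (hS hp).1.2

theorem inv_Wp_pow_le_ap_sq_mul_prod (hQ : (Q : Set ℕ) ⊆ primesLe' n) :
    (Wp n ^ 33)⁻¹ ≤ ap n ^ 2 * ∏ p ∈ Q, (1 - (p : ℝ)⁻¹) := by
  have hW := Wp_pos n
  rw [pow_succ, mul_inv]
  gcongr
  · exact inv_Wp_pow_le_ap_sq (by linarith)
  · exact inv_le_prod_one_sub_inv_primes (fun p hp ↦ (hQ hp).1.1) (fun p hp ↦ (hQ hp).1.2)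
      ((exp_le_exp.mpr (by norm_num)).trans (exp_le_Wp hn))

theorem two_mul_inv_Wp_pow_add_le : 2 * (Wp n ^ 63)⁻¹ + (Wp n ^ 34)⁻¹ ≤ (Wp n ^ 33)⁻¹ := by
  have hW := Wp_pos n
  have hW3 : 3 ≤ Wp n := by linarith [add_one_le_exp (81 : ℝ), exp_le_Wp hn]
  calc 2 * (Wp n ^ 63)⁻¹ + (Wp n ^ 34)⁻¹ ≤ 2 * (Wp n ^ 34)⁻¹ + (Wp n ^ 34)⁻¹ := by
        gcongr <;> linarith
    _ = 3 * (Wp n ^ 34)⁻¹ := by ring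
    _ ≤ Wp n * (Wp n ^ 34)⁻¹ := by gcongr
    _ = (Wp n ^ 33)⁻¹ := by field_simp

end LargeN

end Parameters

/-! ### The sifted sets -/

section Sifted

variable {n : ℕ} {A : Finset ℕ}

theorem OddEquidistributed.abs_card_sifted_sub_le_ap_sq_mul (hA : OddEquidistributed A n)
    (hn : 40 ≤ log (log n)) {S Q : Finset ℕ} (hS : (S : Set ℕ) ⊆ primesLe' n)
    (hQ : (Q : Set ℕ) ⊆ primesLe' n) (hSQ : Disjoint S Q) (hcard : #S ≤ kp n) :
    |(#{m ∈ A | (∀ p ∈ S, p ∣ m) ∧ ∀ p ∈ Q, ¬ p ∣ m} : ℝ)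
        - n * (∏ p ∈ S, (p : ℝ)⁻¹) * ∏ p ∈ Q, (1 - (p : ℝ)⁻¹)|
      ≤ ap n ^ 2 * (n * (∏ p ∈ S, (p : ℝ)⁻¹) * ∏ p ∈ Q, (1 - (p : ℝ)⁻¹)) := by
  set X := n * ∏ p ∈ S, (p : ℝ)⁻¹
  have : 0 ≤ X := by positivity
  calc _ ≤ 2 * (X * (Q.val.map fun p : ℕ ↦ (p : ℝ)⁻¹).esymm (brunDepth n))
          + (#Q + 1) ^ brunDepth n :=
        hA.abs_card_sifted_sub_le n.cast_nonneg (fun p hp ↦ ⟨(hS hp).1.1, (hS hp).2⟩)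
          (fun p hp ↦ ⟨(hQ hp).1.1, (hQ hp).2⟩) hSQ _
    _ ≤ 2 * (X * (Wp n ^ 63)⁻¹) + (Wp n ^ 34)⁻¹ * X := by
        gcongr
        exacts [esymm_brunDepth_le hn hQ, card_add_one_pow_brunDepth_le hn hQ hS hcard]
    _ = (2 * (Wp n ^ 63)⁻¹ + (Wp n ^ 34)⁻¹) * X := by ring
    _ ≤ (ap n ^ 2 * ∏ p ∈ Q, (1 - (p : ℝ)⁻¹)) * X := by
        gcongr
        exact (two_mul_inv_Wp_pow_add_le hn).trans (inv_Wp_pow_le_ap_sq_mul_prod hn hQ)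
    _ = ap n ^ 2 * (X * ∏ p ∈ Q, (1 - (p : ℝ)⁻¹)) := by ring

theorem finite_primesLe' (n : ℕ) : (primesLe' n).Finite :=
  (Set.finite_Iic ⌊Wp n⌋₊).subset fun _ hp ↦ Nat.le_floor hp.1.2

theorem forall_mem_iff_mem_iff {ι : Type*} {s t : Set ι} (hst : s ⊆ t) (P : ι → Prop) :
    (∀ i ∈ t, (P i ↔ i ∈ s)) ↔ (∀ i ∈ s, P i) ∧ ∀ i ∈ t \ s, ¬ P i :=
  ⟨fun h ↦ ⟨fun i hi ↦ (h i (hst hi)).mpr hi, fun i hi hP ↦ hi.2 ((h i hi.1).mp hP)⟩,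
    fun h i hi ↦ ⟨fun hP ↦ of_not_not fun his ↦ h.2 i ⟨hi, his⟩ hP, h.1 i⟩⟩

theorem OddEquidistributed.abs_ncard_sifted_sub_le_ap_sq_mul (hA : OddEquidistributed A n)
    (hn : 40 ≤ log (log n)) {S : Set ℕ} (hS : S ⊆ primesLe' n) (hcard : S.ncard ≤ kp n) :
    |({m ∈ (A : Set ℕ) | ∀ p ∈ primesLe' n, (p ∣ m ↔ p ∈ S)}.ncard : ℝ)
        - n * (∏ᶠ p ∈ S, (p : ℝ)⁻¹) * ∏ᶠ p ∈ primesLe' n \ S, (1 - (p : ℝ)⁻¹)|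
      ≤ ap n ^ 2 *
        (n * (∏ᶠ p ∈ S, (p : ℝ)⁻¹) * ∏ᶠ p ∈ primesLe' n \ S, (1 - (p : ℝ)⁻¹)) := by
  simp only [forall_mem_iff_mem_iff hS]
  have hfin := finite_primesLe' n
  lift S to Finset ℕ using hfin.subset hS
  obtain ⟨Q, hQ⟩ := (hfin.subset (Set.sdiff_subset (t := (S : Set ℕ)))).exists_finset_coe
  have hSQ : Disjoint S Q := by
    rw [← disjoint_coe, hQ]
    exact Set.disjoint_sdiff_right
  have hcount : {m ∈ (A : Set ℕ) | (∀ p ∈ (S : Set ℕ), p ∣ m) ∧ ∀ p ∈ (Q : Set ℕ), ¬ p ∣ m}.ncard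
      = #{m ∈ A | (∀ p ∈ S, p ∣ m) ∧ ∀ p ∈ Q, ¬ p ∣ m} := by
    rw [← Set.ncard_coe_finset, coe_filter]
    rfl
  rw [← hQ, hcount, finprod_mem_coe_finset, finprod_mem_coe_finset]
  rw [Set.ncard_coe_finset] at hcard
  exact hA.abs_card_sifted_sub_le_ap_sq_mul hn hS (hQ ▸ Set.sdiff_subset) hSQ hcard

theorem BSet_eq (n : ℕ) (S : Set ℕ) :
    BSet n S = {m ∈ (Icc 1 n : Set ℕ) | ∀ p ∈ primesLe' n, (p ∣ m ↔ p ∈ S)} := by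
  ext m
  simp only [BSet, coe_Icc, Set.mem_Icc, Set.mem_ofPred_eq, and_assoc]

theorem CSet_eq (n : ℕ) (S : Set ℕ) :
    CSet n S = {m ∈ (({m ∈ range (2 * n) | Odd m} : Finset ℕ) : Set ℕ) |
      ∀ p ∈ primesLe' n, (p ∣ m ↔ p ∈ S)} := by
  ext m
  simp only [CSet, oddSet, coe_filter, mem_range, Set.mem_ofPred_eq, and_comm (a := Odd m)]

end Sifted

/-- For all sufficiently large `n` and all `S ⊆ 𝒫'_W` with `|S| < k`, both `|B_S|` and
`|C_S|` equal `(1 ± α²) · n · ∏_{p ∈ S} p⁻¹ · ∏_{p ∈ 𝒫'_W \ S} (1 − p⁻¹)`. -/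
theorem BSet_CSet_ncard_asymptotic :
    ∃ N : ℕ, ∀ n : ℕ, N ≤ n → ∀ S : Set ℕ, S ⊆ primesLe' n → (S.ncard : ℝ) < kp n →
      ((1 - ap n ^ 2) *
          ((n : ℝ) * (∏ᶠ p ∈ S, ((p : ℝ))⁻¹) * ∏ᶠ p ∈ primesLe' n \ S, (1 - (p : ℝ)⁻¹))
        ≤ ((BSet n S).ncard : ℝ) ∧
      ((BSet n S).ncard : ℝ) ≤
        (1 + ap n ^ 2) *
          ((n : ℝ) * (∏ᶠ p ∈ S, ((p : ℝ))⁻¹) * ∏ᶠ p ∈ primesLe' n \ S, (1 - (p : ℝ)⁻¹))) ∧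
      ((1 - ap n ^ 2) *
          ((n : ℝ) * (∏ᶠ p ∈ S, ((p : ℝ))⁻¹) * ∏ᶠ p ∈ primesLe' n \ S, (1 - (p : ℝ)⁻¹))
        ≤ ((CSet n S).ncard : ℝ) ∧
      ((CSet n S).ncard : ℝ) ≤
        (1 + ap n ^ 2) *
          ((n : ℝ) * (∏ᶠ p ∈ S, ((p : ℝ))⁻¹) * ∏ᶠ p ∈ primesLe' n \ S, (1 - (p : ℝ)⁻¹))) := by
  have htendsto : Tendsto (fun n : ℕ ↦ log (log n)) atTop atTop :=
    tendsto_log_atTop.comp (tendsto_log_atTop.comp tendsto_natCast_atTop_atTop)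
  obtain ⟨N, hN⟩ := eventually_atTop.mp (htendsto.eventually_ge_atTop 40)
  refine ⟨N, fun n hn S hS hcard ↦ ?_⟩
  have hB := abs_le.mp <|
    (oddEquidistributed_Icc n).abs_ncard_sifted_sub_le_ap_sq_mul (hN n hn) hS hcard.le
  have hC := abs_le.mp <|
    (oddEquidistributed_filter_odd n).abs_ncard_sifted_sub_le_ap_sq_mul (hN n hn) hS hcard.le
  rw [← BSet_eq] at hB
  rw [← CSet_eq] at hC
  refine ⟨⟨?_, ?_⟩, ?_, ?_⟩ <;> linarith [hB.1, hB.2, hC.1, hC.2]
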